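/- arXiv:1911.01210 — 2 statements merged into one kernel-verified Lean document; each statement's English description precedes it below -/
import Mathlib

section
/- Let E∨ := {v ∈ V : s(v, x) ∈ ℤ for all x ∈ E}. Then E ⊆ E₀ ⊆ E∨, E∨ = E₀ + ℤε, the quotient group E∨/E has order 4 with nonzero classes [e], [ε], [e+ε], the map X sends E into E and E∨ into E∨, and the induced map on E∨/E cyclically permutes the three nonzero classes: X[e] = [ε], X[ε] = [e+ε], X[e+ε] = [e]. -/
/-!
`E₀` is `ℤ⁶`, and `E = {x ∈ E₀ | s(ε, x) ∈ ℤ}` is the root lattice `D₆`. Pairing with `2e ∈ E` and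
with the differences of basis vectors shows that a vector of `E∨` has coordinates that are
half-integral and congruent to each other modulo `ℤ`, so that `E∨ = E₀ + ℤε`; the index-two
inclusions `E ⊂ E₀ ⊂ E∨` then produce the four classes.

The map `X` is self-adjoint for `s`, with `X e = ε` and `X ε = e + ε`. Hence
`s(ε, X x) = s(e + ε, x)`, which is integral for `x ∈ E`; this gives `X E ⊆ E`, and adjointness
turns it into `X E∨ ⊆ E∨`.
-/

/-- Index type for the basis `e, e₀, …, e₄` of `V`: `none ↦ e`, `some i ↦ eᵢ`. -/
abbrev J5 := Option (ZMod 5)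

/-- The 6-dimensional `ℚ`-vector space `V` with basis indexed by `J5`. -/
abbrev V := J5 → ℚ

/-- The basis vector of `V` with index `j`. -/
def bvec : J5 → V := fun j => Pi.single j 1

/-- The basis vector `e`. -/
def eV : V := Pi.single none 1

/-- The basis vectors `eᵢ`, `i ∈ ℤ/5`. -/
def ee (i : ZMod 5) : V := Pi.single (some i) 1

/-- The symmetric bilinear form on `V` for which the basis `e, e₀, …, e₄` is orthonormal. -/
def sform (x y : V) : ℚ := ∑ j : J5, x j * y j

/-- `ε = ½(e + e₀ + e₁ + e₂ + e₃ + e₄)`. -/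
def eps : V := (1 / 2 : ℚ) • (eV + ∑ i : ZMod 5, ee i)

/-- The `ℚ`-linear map `X : V → V` determined by `X(e) = ε` and
`X(eᵢ) = ε − e_{i+2} − e_{i−2}` (indices mod 5); in coordinates,
`(X x)(j) = (Σ_t x_t)/2`, minus `x_{k−2} + x_{k+2}` when `j = some k`. -/
def Xmap : V →ₗ[ℚ] V where
  toFun x := fun j =>
    (∑ t : J5, x t) / 2 +
      (match j with
        | none => 0
        | some k => -(x (some (k - 2))) - x (some (k + 2)))
  map_add' x y := by
    funext j
    rcases j with _ | k <;> simp [Finset.sum_add_distrib] <;> ring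
  map_smul' c x := by
    funext j
    have hs : (∑ i : ZMod 5, c * x (some i)) = c * ∑ i : ZMod 5, x (some i) :=
      (Finset.mul_sum _ _ _).symm
    rcases j with _ | k <;> simp <;> rw [hs] <;> ring

/-- `E₀ ⊂ V`: the `ℤ`-span of the basis `{e, e₀, …, e₄}`. -/
def E0 : Submodule ℤ V := Submodule.span ℤ (Set.range bvec)

/-- `E ⊂ E₀`: the integral combinations of the basis with even coefficient sum. -/
def Eset : Set V := {x | x ∈ E0 ∧ ∃ m : ℤ, (∑ j : J5, x j) = 2 * m}

/-- `E∨ = {v ∈ V : s(v, x) ∈ ℤ for all x ∈ E}`. -/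
def Edual : Set V := {v | ∀ x ∈ Eset, ∃ n : ℤ, sform v x = (n : ℚ)}

section DualLattice

variable {R S M : Type*} [CommRing R] [Field S] [AddCommGroup M] [Algebra R S] [Module R M]
  [Module S M] [IsScalarTower R S M] {B : LinearMap.BilinForm S M}

theorem map_mem_dualSubmodule_of_isAdjointPair {N : Submodule R M} {f g : M → M}
    (hfg : LinearMap.IsAdjointPair B B f g) (hg : ∀ y ∈ N, g y ∈ N) {x : M}
    (hx : x ∈ B.dualSubmodule N) : f x ∈ B.dualSubmodule N :=
  fun y hy => hfg x y ▸ hx (g y) (hg y hy)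

end DualLattice

theorem sum_sub_mul_eq_sum_mul_add {G R : Type*} [AddGroup G] [Fintype G]
    [NonUnitalNonAssocSemiring R] (f g : G → R) (c : G) :
    ∑ k, f (k - c) * g k = ∑ k, f k * g (k + c) := by
  simpa only [Equiv.coe_addRight, add_sub_cancel_right] using
    (Fintype.sum_equiv (Equiv.addRight c) _ (fun k => f (k - c) * g k) fun _ => rfl).symm

theorem half_notMem_one : (1 / 2 : ℚ) ∉ (1 : Submodule ℤ ℚ) := by
  intro h
  obtain ⟨n, hn⟩ := Submodule.mem_one.1 h
  have : 2 * n = 1 := by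
    rw [eq_intCast] at hn
    exact_mod_cast (by rw [hn]; norm_num : 2 * (n : ℚ) = 1)
  lia

theorem mem_one_or_sub_half_mem_one {q : ℚ} (hq : 2 * q ∈ (1 : Submodule ℤ ℚ)) :
    q ∈ (1 : Submodule ℤ ℚ) ∨ q - 1 / 2 ∈ (1 : Submodule ℤ ℚ) := by
  obtain ⟨n, hn⟩ := Submodule.mem_one.1 hq
  rw [eq_intCast] at hn
  obtain ⟨k, rfl | rfl⟩ := n.even_or_odd' <;> push_cast at hn
  · exact .inl (Submodule.mem_one.2 ⟨k, by rw [eq_intCast]; linarith⟩)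
  · exact .inr (Submodule.mem_one.2 ⟨k, by rw [eq_intCast]; linarith⟩)

section EvenLattice

variable {ι : Type*}

/-- The standard lattice `ℤ^ι` in `ℚ^ι`. Integrality of a rational number is expressed throughout
as membership in `(1 : Submodule ℤ ℚ)`, as in `LinearMap.BilinForm.dualSubmodule`. -/
def intLattice (ι : Type*) [Finite ι] : Submodule ℤ (ι → ℚ) :=
  Submodule.span ℤ (Set.range (Pi.basisFun ℚ ι))

theorem mem_intLattice_iff [Finite ι] {x : ι → ℚ} :
    x ∈ intLattice ι ↔ ∀ j, x j ∈ (1 : Submodule ℤ ℚ) := by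
  simp only [intLattice, Module.Basis.mem_span_iff_repr_mem, Pi.basisFun_repr, Set.mem_range,
    Submodule.mem_one]

theorem single_mem_intLattice [Finite ι] [DecidableEq ι] (i : ι) : Pi.single i 1 ∈ intLattice ι :=
  Submodule.subset_span ⟨i, Pi.basisFun_apply ℚ ι i⟩

/-- The vector `½(1, …, 1)`, the glue vector that generates `D_ι∨` together with `ℤ^ι`. -/
def halfOnes (ι : Type*) : ι → ℚ := fun _ => 1 / 2

theorem halfOnes_notMem_intLattice [Finite ι] [Nonempty ι] : halfOnes ι ∉ intLattice ι :=
  fun h => half_notMem_one (mem_intLattice_iff.1 h (Classical.arbitrary ι))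

variable [Fintype ι]

/-- The root lattice `D_ι` of integer vectors with even coordinate sum; evenness is encoded as
integrality of the dot product with `halfOnes ι`. -/
def evenLattice (ι : Type*) [Fintype ι] : Submodule ℤ (ι → ℚ) :=
  intLattice ι ⊓
    (1 : Submodule ℤ ℚ).comap ((dotProductBilin ℚ ℚ (halfOnes ι)).restrictScalars ℤ)

/-- The dual lattice `D_ι∨` with respect to the dot product. -/
def evenLatticeDual (ι : Type*) [Fintype ι] : Submodule ℤ (ι → ℚ) :=
  LinearMap.BilinForm.dualSubmodule (dotProductBilin ℚ ℚ) (evenLattice ι)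

theorem mem_evenLattice_iff {x : ι → ℚ} :
    x ∈ evenLattice ι ↔ x ∈ intLattice ι ∧ halfOnes ι ⬝ᵥ x ∈ (1 : Submodule ℤ ℚ) :=
  Iff.rfl

theorem mem_evenLatticeDual_iff {v : ι → ℚ} :
    v ∈ evenLatticeDual ι ↔ ∀ x ∈ evenLattice ι, v ⬝ᵥ x ∈ (1 : Submodule ℤ ℚ) :=
  Iff.rfl

theorem two_mul_halfOnes_dotProduct (x : ι → ℚ) : 2 * (halfOnes ι ⬝ᵥ x) = ∑ j, x j := by
  simp only [dotProduct, halfOnes, ← Finset.mul_sum]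
  ring

theorem two_mul_halfOnes_dotProduct_mem_one {x : ι → ℚ} (hx : x ∈ intLattice ι) :
    2 * (halfOnes ι ⬝ᵥ x) ∈ (1 : Submodule ℤ ℚ) :=
  two_mul_halfOnes_dotProduct x ▸ sum_mem fun j _ => mem_intLattice_iff.1 hx j

theorem halfOnes_dotProduct_single [DecidableEq ι] (i : ι) :
    halfOnes ι ⬝ᵥ Pi.single i 1 = 1 / 2 :=
  dotProduct_single_one _ i

theorem halfOnes_dotProduct_halfOnes : halfOnes ι ⬝ᵥ halfOnes ι = Fintype.card ι / 4 := by
  simp only [dotProduct, halfOnes, Finset.sum_const, Finset.card_univ, nsmul_eq_mul]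
  ring

theorem halfOnes_add_halfOnes_mem_evenLattice (hcard : Even (Fintype.card ι)) :
    halfOnes ι + halfOnes ι ∈ evenLattice ι := by
  obtain ⟨n, hn⟩ := hcard
  refine mem_evenLattice_iff.2 ⟨mem_intLattice_iff.2 fun j => ?_, ?_⟩
  · exact Submodule.mem_one.2 ⟨1, by norm_num [halfOnes]⟩
  · rw [dotProduct_add, halfOnes_dotProduct_halfOnes, hn]
    refine Submodule.mem_one.2 ⟨n, ?_⟩
    push_cast
    ring

theorem single_notMem_evenLattice [DecidableEq ι] (i : ι) : Pi.single i 1 ∉ evenLattice ι :=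
  fun h => half_notMem_one (halfOnes_dotProduct_single i ▸ h.2)

theorem mem_evenLattice_or_sub_single_mem [DecidableEq ι] {x : ι → ℚ} (hx : x ∈ intLattice ι)
    (i : ι) : x ∈ evenLattice ι ∨ x - Pi.single i 1 ∈ evenLattice ι := by
  refine (mem_one_or_sub_half_mem_one (two_mul_halfOnes_dotProduct_mem_one hx)).imp
    (fun h => ⟨hx, h⟩) fun h => ⟨sub_mem hx (single_mem_intLattice i), ?_⟩
  rwa [← halfOnes_dotProduct_single i, ← dotProduct_sub] at h

theorem two_smul_mem_evenLattice {x : ι → ℚ} (hx : x ∈ intLattice ι) :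
    (2 : ℚ) • x ∈ evenLattice ι := by
  refine mem_evenLattice_iff.2 ⟨?_, ?_⟩
  · rw [two_smul]
    exact add_mem hx hx
  · rw [dotProduct_smul]
    exact two_mul_halfOnes_dotProduct_mem_one hx

theorem single_sub_single_mem_evenLattice [DecidableEq ι] (i j : ι) :
    (Pi.single i 1 - Pi.single j 1 : ι → ℚ) ∈ evenLattice ι := by
  refine mem_evenLattice_iff.2
    ⟨sub_mem (single_mem_intLattice i) (single_mem_intLattice j), ?_⟩
  rw [dotProduct_sub, halfOnes_dotProduct_single, halfOnes_dotProduct_single, sub_self]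
  exact zero_mem _

theorem intLattice_le_evenLatticeDual : intLattice ι ≤ evenLatticeDual ι := by
  classical
  refine Submodule.span_le.2 ?_
  rintro _ ⟨j, rfl⟩ x hx
  simpa using mem_intLattice_iff.1 hx.1 j

theorem halfOnes_mem_evenLatticeDual : halfOnes ι ∈ evenLatticeDual ι :=
  fun _ hx => hx.2

theorem apply_sub_apply_mem_one_of_mem_dual {v : ι → ℚ} (hv : v ∈ evenLatticeDual ι) (i j : ι) :
    v i - v j ∈ (1 : Submodule ℤ ℚ) := by
  classical
  have h := mem_evenLatticeDual_iff.1 hv _ (single_sub_single_mem_evenLattice i j)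
  rwa [dotProduct_sub, dotProduct_single_one, dotProduct_single_one] at h

theorem two_mul_apply_mem_one_of_mem_dual {v : ι → ℚ} (hv : v ∈ evenLatticeDual ι) (i : ι) :
    2 * v i ∈ (1 : Submodule ℤ ℚ) := by
  classical
  have h := mem_evenLatticeDual_iff.1 hv _ (two_smul_mem_evenLattice (single_mem_intLattice i))
  rwa [dotProduct_smul, dotProduct_single_one, smul_eq_mul] at h

theorem evenLatticeDual_eq_sup [Nonempty ι] :
    evenLatticeDual ι = intLattice ι ⊔ Submodule.span ℤ {halfOnes ι} := by
  refine le_antisymm (fun v hv => ?_) (sup_le intLattice_le_evenLatticeDual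
    ((Submodule.span_singleton_le_iff_mem _ _).2 halfOnes_mem_evenLatticeDual))
  let i := Classical.arbitrary ι
  obtain ⟨c, hc⟩ := Submodule.mem_one.1 (two_mul_apply_mem_one_of_mem_dual hv i)
  have hsub : v - c • halfOnes ι ∈ intLattice ι := mem_intLattice_iff.2 fun j => by
    have hcoord : (v - c • halfOnes ι) j = v j - v i := by
      rw [Pi.sub_apply, ← algebraMap_smul ℚ c, hc, Pi.smul_apply, halfOnes, smul_eq_mul]
      ring
    exact hcoord ▸ apply_sub_apply_mem_one_of_mem_dual hv j i
  exact Submodule.mem_sup.2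
    ⟨_, hsub, _, Submodule.mem_span_singleton.2 ⟨c, rfl⟩, sub_add_cancel _ _⟩

theorem mem_evenLatticeDual_iff_exists [Nonempty ι] {v : ι → ℚ} :
    v ∈ evenLatticeDual ι ↔ ∃ x ∈ intLattice ι, ∃ n : ℤ, v = x + (n : ℚ) • halfOnes ι := by
  simp only [evenLatticeDual_eq_sup, Submodule.mem_sup, Submodule.mem_span_singleton,
    Int.cast_smul_eq_zsmul, ↓existsAndEq, true_and, eq_comm (a := v)]

theorem mem_intLattice_or_sub_halfOnes_mem_of_mem_dual [Nonempty ι] {v : ι → ℚ}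
    (hv : v ∈ evenLatticeDual ι) : v ∈ intLattice ι ∨ v - halfOnes ι ∈ intLattice ι := by
  let i := Classical.arbitrary ι
  refine (mem_one_or_sub_half_mem_one (two_mul_apply_mem_one_of_mem_dual hv i)).imp
    (fun h => mem_intLattice_iff.2 fun j => ?_) fun h => mem_intLattice_iff.2 fun j => ?_
  · exact sub_add_cancel (v j) (v i) ▸ add_mem (apply_sub_apply_mem_one_of_mem_dual hv j i) h
  · rw [Pi.sub_apply, halfOnes, ← sub_add_sub_cancel (v j) (v i)]
    exact add_mem (apply_sub_apply_mem_one_of_mem_dual hv j i) h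

theorem mem_evenLattice_or_sub_mem_of_mem_dual [DecidableEq ι] {v : ι → ℚ}
    (hv : v ∈ evenLatticeDual ι) (i : ι) :
    v ∈ evenLattice ι ∨ v - Pi.single i 1 ∈ evenLattice ι ∨ v - halfOnes ι ∈ evenLattice ι ∨
      v - (Pi.single i 1 + halfOnes ι) ∈ evenLattice ι := by
  have : Nonempty ι := ⟨i⟩
  rw [add_comm, ← sub_sub, ← or_assoc]
  exact (mem_intLattice_or_sub_halfOnes_mem_of_mem_dual hv).imp
    (mem_evenLattice_or_sub_single_mem · i) (mem_evenLattice_or_sub_single_mem · i)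

end EvenLattice

theorem E0_eq_intLattice : E0 = intLattice J5 := by
  have hbasis : bvec = Pi.basisFun ℚ J5 := funext fun j => (Pi.basisFun_apply ℚ J5 j).symm
  rw [E0, intLattice, hbasis]

theorem eps_eq_halfOnes : eps = halfOnes J5 := by
  funext j
  rcases j with _ | k <;> simp [eps, eV, ee, halfOnes, Pi.single_apply]

theorem Eset_eq_evenLattice : Eset = evenLattice J5 := by
  ext x
  have heven (m : ℤ) : 2 * (halfOnes J5 ⬝ᵥ x) = 2 * m ↔ (m : ℚ) = halfOnes J5 ⬝ᵥ x := by
    rw [mul_right_inj' two_ne_zero, eq_comm]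
  simp only [Eset, E0_eq_intLattice, Set.mem_ofPred_eq, SetLike.mem_coe, mem_evenLattice_iff,
    Submodule.mem_one, eq_intCast, ← two_mul_halfOnes_dotProduct, heven]

theorem Edual_eq_evenLatticeDual : Edual = evenLatticeDual J5 := by
  ext v
  simp only [Edual, Eset_eq_evenLattice, Set.mem_ofPred_eq, SetLike.mem_coe,
    mem_evenLatticeDual_iff, Submodule.mem_one, eq_intCast, sform, dotProduct, eq_comm]

theorem Xmap_none (x : V) : Xmap x none = halfOnes J5 ⬝ᵥ x := by
  rw [← mul_right_inj' (two_ne_zero' ℚ), two_mul_halfOnes_dotProduct]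
  simp only [Xmap, LinearMap.coe_mk, AddHom.coe_mk]
  ring

theorem Xmap_some (x : V) (k : ZMod 5) :
    Xmap x (some k) = halfOnes J5 ⬝ᵥ x - (x (some (k - 2)) + x (some (k + 2))) := by
  rw [← Xmap_none]
  simp only [Xmap, LinearMap.coe_mk, AddHom.coe_mk]
  ring

theorem Xmap_eV : Xmap eV = halfOnes J5 := by
  funext j
  rcases j with _ | k
  · rw [Xmap_none, eV, halfOnes_dotProduct_single, halfOnes]
  · simp [Xmap_some, eV, halfOnes]

theorem Xmap_halfOnes : Xmap (halfOnes J5) = eV + halfOnes J5 := by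
  have hnorm : halfOnes J5 ⬝ᵥ halfOnes J5 = 3 / 2 := by
    norm_num [halfOnes_dotProduct_halfOnes]
  funext j
  rcases j with _ | k
  · rw [Xmap_none, hnorm]
    norm_num [eV, halfOnes]
  · rw [Xmap_some, hnorm, Pi.add_apply, eV, Pi.single_eq_of_ne (Option.some_ne_none k)]
    norm_num [halfOnes]

theorem Xmap_dotProduct (x y : V) :
    Xmap x ⬝ᵥ y = 2 * (halfOnes J5 ⬝ᵥ x) * (halfOnes J5 ⬝ᵥ y) -
      ∑ k, (x (some k) * y (some (k + 2)) + x (some (k + 2)) * y (some k)) := by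
  have hshift := sum_sub_mul_eq_sum_mul_add (fun k => x (some k)) (fun k => y (some k)) 2
  rw [mul_right_comm, two_mul_halfOnes_dotProduct, dotProduct, Fintype.sum_option,
    Fintype.sum_option, Finset.sum_add_distrib, ← hshift]
  simp only [Xmap_none, Xmap_some, sub_mul, add_mul, Finset.sum_sub_distrib,
    Finset.sum_add_distrib, ← Finset.mul_sum]
  ring

theorem isSelfAdjoint_Xmap :
    (dotProductBilin ℚ ℚ : LinearMap.BilinForm ℚ V).IsSelfAdjoint Xmap := by
  intro x y
  change Xmap x ⬝ᵥ y = x ⬝ᵥ Xmap y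
  rw [dotProduct_comm x, Xmap_dotProduct, Xmap_dotProduct, mul_right_comm]
  simp only [mul_comm, add_comm]

theorem halfOnes_dotProduct_Xmap (x : V) :
    halfOnes J5 ⬝ᵥ Xmap x = x none + halfOnes J5 ⬝ᵥ x := by
  have h : Xmap (halfOnes J5) ⬝ᵥ x = halfOnes J5 ⬝ᵥ Xmap x := isSelfAdjoint_Xmap _ _
  rw [← h, Xmap_halfOnes, add_dotProduct, eV, single_one_dotProduct]

theorem Xmap_mem_evenLattice {x : V} (hx : x ∈ evenLattice J5) : Xmap x ∈ evenLattice J5 := by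
  obtain ⟨hint, heven⟩ := mem_evenLattice_iff.1 hx
  rw [mem_intLattice_iff] at hint
  refine mem_evenLattice_iff.2 ⟨mem_intLattice_iff.2 ?_, ?_⟩
  · rintro (_ | k)
    · rwa [Xmap_none]
    · rw [Xmap_some]
      exact sub_mem heven (add_mem (hint _) (hint _))
  · rw [halfOnes_dotProduct_Xmap]
    exact add_mem (hint none) heven

theorem Xmap_mem_evenLatticeDual {v : V} (hv : v ∈ evenLatticeDual J5) :
    Xmap v ∈ evenLatticeDual J5 :=
  map_mem_dualSubmodule_of_isAdjointPair isSelfAdjoint_Xmap (fun _ => Xmap_mem_evenLattice) hv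

/-- `E ⊆ E₀ ⊆ E∨`; `E∨ = E₀ + ℤε`; the quotient `E∨/E` has order 4, with distinct nonzero
classes `[e], [ε], [e+ε]`; `X` preserves `E` and `E∨`; and the induced action of `X` on
`E∨/E` cyclically permutes the three nonzero classes `[e] ↦ [ε] ↦ [e+ε] ↦ [e]`. -/
theorem Edual_structure :
    Eset ⊆ (E0 : Set V) ∧
    (E0 : Set V) ⊆ Edual ∧
    Edual = {v : V | ∃ x ∈ E0, ∃ n : ℤ, v = x + (n : ℚ) • eps} ∧
    (∀ v ∈ Edual, v ∈ Eset ∨ v - eV ∈ Eset ∨ v - eps ∈ Eset ∨ v - (eV + eps) ∈ Eset) ∧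
    eV ∉ Eset ∧ eps ∉ Eset ∧ eV + eps ∉ Eset ∧ eps - eV ∉ Eset ∧
    (∀ x ∈ Eset, Xmap x ∈ Eset) ∧
    (∀ v ∈ Edual, Xmap v ∈ Edual) ∧
    Xmap eV - eps ∈ Eset ∧ Xmap eps - (eV + eps) ∈ Eset ∧
    Xmap (eV + eps) - eV ∈ Eset := by
  have heV : eV ∈ intLattice J5 := single_mem_intLattice none
  have hhalf : halfOnes J5 ∉ intLattice J5 := halfOnes_notMem_intLattice
  simp only [Edual_eq_evenLatticeDual, Eset_eq_evenLattice, E0_eq_intLattice, eps_eq_halfOnes,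
    SetLike.mem_coe]
  refine ⟨inf_le_left, intLattice_le_evenLatticeDual,
    Set.ext fun _ => mem_evenLatticeDual_iff_exists,
    fun _ hv => mem_evenLattice_or_sub_mem_of_mem_dual hv none,
    single_notMem_evenLattice none, fun h => hhalf h.1,
    fun h => hhalf ((add_mem_cancel_left heV).1 h.1),
    fun h => hhalf (sub_add_cancel (halfOnes J5) eV ▸ add_mem h.1 heV),
    fun _ => Xmap_mem_evenLattice, fun _ => Xmap_mem_evenLatticeDual, ?_, ?_, ?_⟩
  · rw [Xmap_eV, sub_self]
    exact zero_mem _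
  · rw [Xmap_halfOnes, sub_self]
    exact zero_mem _
  · rw [map_add, Xmap_eV, Xmap_halfOnes, add_left_comm, add_sub_cancel_left]
    exact halfOnes_add_halfOnes_mem_evenLattice (by decide)
end

section
/- Let T : V → V be a ℚ-linear map commuting with σ₅ and with σ₂. Then: (i) there exist a, b ∈ ℚ with T = a·id + b·X (Schur: the commutant of the A₅-action is the field ℚ(√5) = ℚ[X]); (ii) if moreover T(E) ⊆ E, then a, b ∈ ℤ (the commutant of the ℤA₅-module E is 𝒪 = ℤ[X]); (iii) if moreover T(E₀) ⊆ E₀, then a ∈ ℤ and b ∈ 2ℤ (the commutant of E₀ is 𝒪₀ = ℤ + ℤ·2X). -/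
/-- Index rotation `some i ↦ some (i+1)`, `none ↦ none`. -/
def rotIdx : J5 ≃ J5 := Equiv.optionCongr (Equiv.addRight (1 : ZMod 5))

/-- `σ₅ : V ≃ V`, with `σ₅(e) = e` and `σ₅(eᵢ) = e_{i+1}`. -/
def s5 : V ≃ₗ[ℚ] V := LinearEquiv.funCongrLeft ℚ ℚ rotIdx.symm

/-- Index involution underlying `σ₂`. -/
def t2 : J5 → J5
  | none => some 0
  | some i => if i = 0 then none else if i = 1 then some 4 else if i = 4 then some 1 else some i

/-- Sign function underlying `σ₂`. -/
def sg2 : J5 → ℚ := fun j => if j = some 2 ∨ j = some 3 then -1 else 1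

/-- The function underlying `σ₂`. -/
def s2fun : V → V := fun x j => sg2 j * x (t2 j)

lemma t2_invol : ∀ j, t2 (t2 j) = j := by decide

lemma sg2_mul : ∀ j, sg2 j * sg2 (t2 j) = 1 := by
  intro j
  rcases j with _ | i
  · simp (config := { decide := true }) [sg2, t2]
  · fin_cases i <;> simp (config := { decide := true }) [sg2, t2]

lemma s2fun_invol : Function.Involutive s2fun := by
  intro x
  funext j
  show sg2 j * (sg2 (t2 j) * x (t2 (t2 j))) = x j
  rw [t2_invol, ← mul_assoc, sg2_mul, one_mul]

/-- `σ₂ : V ≃ V`, with `σ₂(e) = e₀`, `σ₂(e₀) = e`, `σ₂(e₁) = e₄`, `σ₂(e₄) = e₁`,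
`σ₂(e₂) = −e₂`, `σ₂(e₃) = −e₃`. -/
def s2 : V ≃ₗ[ℚ] V where
  toFun := s2fun
  invFun := s2fun
  left_inv := s2fun_invol
  right_inv := s2fun_invol
  map_add' x y := by funext j; simp [s2fun, mul_add]
  map_smul' c x := by funext j; simp [s2fun]; ring

lemma zmod_induction {n : ℕ} [NeZero n] {P : ZMod n → Prop} (zero : P 0)
    (succ : ∀ i, P i → P (i + 1)) (i : ZMod n) : P i := by
  obtain ⟨k, rfl⟩ := ZMod.natCast_zmod_surjective i
  induction k with
  | zero => simpa using zero
  | succ k ih => simpa using succ _ ih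

lemma s5_bvec_none : s5 (bvec none) = bvec none := by decide +kernel

lemma s5_bvec_some : ∀ i, s5 (bvec (some i)) = bvec (some (i + 1)) := by decide +kernel

lemma s2_bvec_none : s2 (bvec none) = bvec (some 0) := by decide +kernel

lemma s5_apply_some_add_one (v : V) (i : ZMod 5) : s5 v (some (i + 1)) = v (some i) :=
  congrArg (v ∘ some) (add_neg_cancel_right i 1)

lemma bvec_eq_basisFun : bvec = Pi.basisFun ℚ J5 :=
  funext fun j => (Pi.basisFun_apply ℚ J5 j).symm

lemma span_range_bvec : Submodule.span ℚ (Set.range bvec) = ⊤ := by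
  rw [bvec_eq_basisFun, Module.Basis.span_eq]

lemma eq_top_of_bvec_none_mem {p : Submodule ℚ V} (h5 : ∀ v ∈ p, s5 v ∈ p)
    (h2 : ∀ v ∈ p, s2 v ∈ p) (he : bvec none ∈ p) : p = ⊤ := by
  have he₀ : bvec (some 0) ∈ p := s2_bvec_none ▸ h2 _ he
  have hsucc (i : ZMod 5) (hi : bvec (some i) ∈ p) : bvec (some (i + 1)) ∈ p :=
    s5_bvec_some i ▸ h5 _ hi
  rw [eq_top_iff, ← span_range_bvec, Submodule.span_le, Set.range_subset_iff, Option.forall]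
  exact ⟨he, zmod_induction he₀ hsucc⟩

/-- The algebra of endomorphisms of `V` that commute with the action of `A₅`, encoded as the
centralizer of the two generators `σ₅` and `σ₂`. -/
def icosahedralCommutant : Subalgebra ℚ (Module.End ℚ V) :=
  Subalgebra.centralizer ℚ {s5.toLinearMap, s2.toLinearMap}

lemma mem_icosahedralCommutant {T : Module.End ℚ V} :
    T ∈ icosahedralCommutant ↔ (∀ v, T (s5 v) = s5 (T v)) ∧ ∀ v, T (s2 v) = s2 (T v) := by
  simp only [icosahedralCommutant, Subalgebra.mem_centralizer_iff, Set.forall_mem_insert,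
    Set.mem_singleton_iff, forall_eq]
  simp only [LinearMap.ext_iff, Module.End.mul_apply, LinearEquiv.coe_coe, eq_comm (a := T _)]

lemma eq_of_apply_bvec_none_eq {S T : Module.End ℚ V} (hS : S ∈ icosahedralCommutant)
    (hT : T ∈ icosahedralCommutant) (h : S (bvec none) = T (bvec none)) : S = T := by
  rw [mem_icosahedralCommutant] at hS hT
  refine LinearMap.eqLocus_eq_top.mp (eq_top_of_bvec_none_mem (fun v hv => ?_) (fun v hv => ?_) h)
  · rw [LinearMap.mem_eqLocus] at hv ⊢
    rw [hS.1, hT.1, hv]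
  · rw [LinearMap.mem_eqLocus] at hv ⊢
    rw [hS.2, hT.2, hv]

lemma Xmap_mem_icosahedralCommutant : Xmap ∈ icosahedralCommutant := by
  -- `X = ½ (1 + C)` with `C` the Paley conference matrix of order 6: its entry at `(eᵢ, eⱼ)` is the
  -- Legendre symbol of `i - j` mod 5. Conjugation by the signed permutations `σ₅`, `σ₂` fixes `C`.
  have h5 : Xmap ∘ₗ s5 = s5.toLinearMap ∘ₗ Xmap :=
    LinearMap.ext_on_range span_range_bvec (by decide +kernel)
  have h2 : Xmap ∘ₗ s2 = s2.toLinearMap ∘ₗ Xmap :=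
    LinearMap.ext_on_range span_range_bvec (by decide +kernel)
  exact mem_icosahedralCommutant.mpr ⟨LinearMap.congr_fun h5, LinearMap.congr_fun h2⟩

lemma Xmap_bvec_none : Xmap (bvec none) = eps := by decide +kernel

lemma eps_apply : ∀ j, eps j = 1 / 2 := by decide +kernel

lemma exists_eq_smul_bvec_none_add_smul_eps {v : V} (h : s5 v = v) :
    ∃ a b : ℚ, v = a • bvec none + b • eps := by
  have hconst : ∀ i, v (some i) = v (some 0) := zmod_induction rfl fun i hi =>
    calc v (some (i + 1)) = s5 v (some (i + 1)) := by rw [h]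
      _ = v (some i) := s5_apply_some_add_one v i
      _ = v (some 0) := hi
  refine ⟨v none - v (some 0), 2 * v (some 0), funext fun j => ?_⟩
  rcases j with _ | i
  · simp [bvec, eps_apply, mul_comm]
  · simp [bvec, eps_apply, mul_comm, hconst i]

theorem mem_icosahedralCommutant_iff_exists {T : Module.End ℚ V} :
    T ∈ icosahedralCommutant ↔ ∃ a b : ℚ, T = a • LinearMap.id + b • Xmap := by
  have hmem (a b : ℚ) : a • LinearMap.id + b • Xmap ∈ icosahedralCommutant :=
    add_mem (Subalgebra.smul_mem _ (one_mem _) a)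
      (Subalgebra.smul_mem _ Xmap_mem_icosahedralCommutant b)
  refine ⟨fun hT => ?_, fun ⟨a, b, h⟩ => h ▸ hmem a b⟩
  have hfix : s5 (T (bvec none)) = T (bvec none) := by
    rw [← (mem_icosahedralCommutant.mp hT).1, s5_bvec_none]
  obtain ⟨a, b, hab⟩ := exists_eq_smul_bvec_none_add_smul_eps hfix
  refine ⟨a, b, eq_of_apply_bvec_none_eq hT (hmem a b) ?_⟩
  simp [hab, Xmap_bvec_none]

lemma mem_E0_iff {v : V} : v ∈ E0 ↔ ∀ j, ∃ m : ℤ, (m : ℚ) = v j := by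
  simp [E0, bvec_eq_basisFun, Module.Basis.mem_span_iff_repr_mem]

lemma bvec_mem_E0 (j : J5) : bvec j ∈ E0 := Submodule.subset_span ⟨j, rfl⟩

lemma bvec_add_bvec_mem_Eset (i j : J5) : bvec i + bvec j ∈ Eset := by
  have hsum (k : J5) : ∑ l, bvec k l = 1 := by simp [bvec]
  refine ⟨add_mem (bvec_mem_E0 i) (bvec_mem_E0 j), 1, ?_⟩
  simp only [Pi.add_apply, Finset.sum_add_distrib, hsum]
  norm_num

lemma Xmap_bvec_none_add_bvec_zero : Xmap (bvec none + bvec (some 0)) =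
    bvec none + bvec (some 0) + bvec (some 1) + bvec (some 4) := by
  decide +kernel

lemma exists_int_of_apply_bvec_none_add_bvec_zero_mem_E0 {a b : ℚ}
    (h : (a • LinearMap.id + b • Xmap : V →ₗ[ℚ] V) (bvec none + bvec (some 0)) ∈ E0) :
    ∃ m n : ℤ, a = m ∧ b = n := by
  rw [LinearMap.add_apply, LinearMap.smul_apply, LinearMap.smul_apply, LinearMap.id_apply,
    Xmap_bvec_none_add_bvec_zero] at h
  obtain ⟨k, hk⟩ := mem_E0_iff.mp h none
  obtain ⟨n, hn⟩ := mem_E0_iff.mp h (some 1)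
  replace hk : (k : ℚ) = a + b := by simpa [bvec] using hk
  replace hn : (n : ℚ) = b := by simpa +decide [bvec, Pi.single_apply] using hn
  exact ⟨k - n, n, by push_cast; linarith, hn.symm⟩

lemma exists_int_of_apply_bvec_none_mem_E0 {a b : ℚ}
    (h : (a • LinearMap.id + b • Xmap : V →ₗ[ℚ] V) (bvec none) ∈ E0) :
    ∃ m n : ℤ, a = m ∧ b = 2 * n := by
  rw [LinearMap.add_apply, LinearMap.smul_apply, LinearMap.smul_apply, LinearMap.id_apply,
    Xmap_bvec_none] at h
  obtain ⟨k, hk⟩ := mem_E0_iff.mp h none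
  obtain ⟨n, hn⟩ := mem_E0_iff.mp h (some 0)
  replace hk : (k : ℚ) = a + b / 2 := by simpa [bvec, eps_apply, div_eq_mul_inv] using hk
  replace hn : (n : ℚ) = b / 2 := by simpa [bvec, eps_apply, div_eq_mul_inv] using hn
  exact ⟨k - n, n, by push_cast; linarith, by linarith⟩

/-- Schur's lemma for the icosahedral module `V` and the commutants of the lattices `E`
and `E₀`: a `ℚ`-linear map `T : V → V` commuting with `σ₅` and `σ₂` is of the form
`a·id + b·X` with `a, b ∈ ℚ`; if moreover `T(E) ⊆ E` then `a, b ∈ ℤ` (the commutant of `E`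
is `𝒪 = ℤ[X]`); and if moreover `T(E₀) ⊆ E₀` then `a ∈ ℤ` and `b ∈ 2ℤ` (the commutant of
`E₀` is `𝒪₀ = ℤ + ℤ·2X`). -/
theorem commutant_of_icosahedral_action (T : V →ₗ[ℚ] V)
    (h5 : ∀ v : V, T (s5 v) = s5 (T v))
    (h2 : ∀ v : V, T (s2 v) = s2 (T v)) :
    (∃ a b : ℚ, T = a • (LinearMap.id : V →ₗ[ℚ] V) + b • Xmap) ∧
    ((∀ x ∈ Eset, T x ∈ Eset) →
      ∃ a b : ℤ, T = (a : ℚ) • (LinearMap.id : V →ₗ[ℚ] V) + (b : ℚ) • Xmap) ∧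
    ((∀ x : V, x ∈ E0 → T x ∈ E0) →
      ∃ a b : ℤ, T = (a : ℚ) • (LinearMap.id : V →ₗ[ℚ] V) + (2 * b : ℚ) • Xmap) := by
  obtain ⟨a, b, rfl⟩ :=
    mem_icosahedralCommutant_iff_exists.mp (mem_icosahedralCommutant.mpr ⟨h5, h2⟩)
  refine ⟨⟨a, b, rfl⟩, fun hE => ?_, fun hE0 => ?_⟩
  · obtain ⟨m, n, rfl, rfl⟩ := exists_int_of_apply_bvec_none_add_bvec_zero_mem_E0
      (hE _ (bvec_add_bvec_mem_Eset none (some 0))).1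
    exact ⟨m, n, rfl⟩
  · obtain ⟨m, n, rfl, rfl⟩ := exists_int_of_apply_bvec_none_mem_E0 (hE0 _ (bvec_mem_E0 none))
    exact ⟨m, n, rfl⟩
end
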